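/- arXiv:2407.05009 — 5 statements merged into one kernel-verified Lean document; each statement's English description precedes it below -/
import Mathlib

section
/- Let L > 0 and let f : [0,L] → ℝ be continuous on [0,L], continuously differentiable on [0,L), with f(x) > 0 for all x ∈ [0,L), f′(x) < 0 for all x ∈ (0,L), and f(L) = 0. Define μ(x) = −f′(x)/f(x) for x ∈ [0,L). Then: (a) μ(x) > 0 for x ∈ (0,L); (b) for every l ∈ (0,L), ∫₀^l μ(s) ds = log(f(0)/f(l)) < ∞; (c) ∫₀ˣ μ(s) ds → ∞ as x → L⁻ (so ∫₀^L μ(s) ds = ∞); and (d) for every x ∈ [0,L), exp(−∫₀ˣ μ(s) ds) = f(x)/f(0); consequently, if f(0) = λ p₀* for constants λ > 0 and p₀* > 0, then λ p₀* exp(−∫₀ˣ μ(s) ds) = f(x) for all x ∈ [0,L). -/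
/-- The time-independent repair rate `μ = −f′/f` built from a desired failure-mode density `f`
is positive, integrable on `[0,l]` for `l < L`, has divergent integral as `x → L⁻`, and
reproduces `f` as the steady-state profile. -/
theorem stmt4 (L : ℝ) (hL : 0 < L) (f f' : ℝ → ℝ)
    (hfc : ContinuousOn f (Set.Icc 0 L))
    (hf' : ∀ x ∈ Set.Ico (0:ℝ) L, HasDerivWithinAt f (f' x) (Set.Ico 0 L) x)
    (hf'c : ContinuousOn f' (Set.Ico 0 L))
    (hfpos : ∀ x ∈ Set.Ico (0:ℝ) L, 0 < f x)
    (hf'neg : ∀ x ∈ Set.Ioo (0:ℝ) L, f' x < 0)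
    (hfL : f L = 0)
    (μ : ℝ → ℝ) (hμ : ∀ x ∈ Set.Ico (0:ℝ) L, μ x = -f' x / f x) :
    (∀ x ∈ Set.Ioo (0:ℝ) L, 0 < μ x) ∧
    (∀ l ∈ Set.Ioo (0:ℝ) L, ∫ s in (0:ℝ)..l, μ s = Real.log (f 0 / f l)) ∧
    Filter.Tendsto (fun x => ∫ s in (0:ℝ)..x, μ s) (nhdsWithin L (Set.Iio L)) Filter.atTop ∧
    (∀ x ∈ Set.Ico (0:ℝ) L, Real.exp (-∫ s in (0:ℝ)..x, μ s) = f x / f 0) ∧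
    (∀ lam p₀s : ℝ, 0 < lam → 0 < p₀s → f 0 = lam * p₀s →
      ∀ x ∈ Set.Ico (0:ℝ) L, lam * p₀s * Real.exp (-∫ s in (0:ℝ)..x, μ s) = f x) := by
  have h0 : (0:ℝ) ∈ Set.Ico (0:ℝ) L := ⟨le_refl _, hL⟩
  have hf0 := hfpos 0 h0
  have hfI : ContinuousOn f (Set.Ico 0 L) := hfc.mono Set.Ico_subset_Icc_self
  have hμc : ContinuousOn μ (Set.Ico 0 L) :=
    (hf'c.neg.div hfI (fun x hx => (hfpos x hx).ne')).congr hμ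
  have key : ∀ l ∈ Set.Ico (0:ℝ) L, ∫ s in (0:ℝ)..l, μ s = Real.log (f 0) - Real.log (f l) := by
    intro l hl
    have hsub : Set.Icc 0 l ⊆ Set.Ico 0 L := fun y hy => ⟨hy.1, hy.2.trans_lt hl.2⟩
    have hlog : ContinuousOn (fun x => -Real.log (f x)) (Set.Icc 0 l) :=
      ((hfI.mono hsub).log (fun x hx => (hfpos x (hsub hx)).ne')).neg
    have h := intervalIntegral.integral_eq_sub_of_hasDerivAt_of_le hl.1 hlog (f' := μ)
      (fun x hx => by
        have hx' := hsub (Set.Ioo_subset_Icc_self hx)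
        have hd : HasDerivAt f (f' x) x :=
          (hf' x hx').hasDerivAt (Ico_mem_nhds hx.1 hx'.2)
        have h2 := (hd.log (hfpos x hx').ne').neg
        rw [hμ x hx', neg_div]
        exact h2)
      ((hμc.mono hsub).intervalIntegrable_of_Icc hl.1)
    rw [h]; ring
  have hexp : ∀ x ∈ Set.Ico (0:ℝ) L, Real.exp (-∫ s in (0:ℝ)..x, μ s) = f x / f 0 := by
    intro x hx
    rw [key x hx, neg_sub, Real.exp_sub, Real.exp_log (hfpos x hx), Real.exp_log hf0]
  have hev : ∀ᶠ x in nhdsWithin L (Set.Iio L), x ∈ Set.Ico (0:ℝ) L := Ico_mem_nhdsLT hL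
  refine ⟨?_, ?_, ?_, hexp, ?_⟩
  · intro x hx
    have hx' := Set.Ioo_subset_Ico_self hx
    rw [hμ x hx']
    exact div_pos (neg_pos.2 (hf'neg x hx)) (hfpos x hx')
  · intro l hl
    have hl' := Set.Ioo_subset_Ico_self hl
    rw [key l hl', Real.log_div hf0.ne' (hfpos l hl').ne']
  · have hlim : Filter.Tendsto f (nhdsWithin L (Set.Iio L)) (nhdsWithin 0 (Set.Ioi 0)) := by
      refine tendsto_nhdsWithin_iff.2 ⟨?_, hev.mono fun x hx => hfpos x hx⟩
      have h1 := hfc L ⟨hL.le, le_refl _⟩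
      rw [ContinuousWithinAt, hfL] at h1
      refine h1.mono_left (nhdsWithin_le_iff.2 ?_)
      exact hev.mono fun x hx => Set.Ico_subset_Icc_self hx
    have h2 := Real.tendsto_log_nhdsGT_zero.comp hlim
    have h3 := Filter.tendsto_atTop_add_const_left _ (Real.log (f 0))
      (Filter.tendsto_neg_atBot_atTop.comp h2)
    refine h3.congr' (hev.mono fun x hx => ?_)
    beta_reduce; rw [key x hx]
    simp [sub_eq_add_neg]
  · intro lam p _ _ h x hx
    rw [hexp x hx, ← h, mul_div_cancel₀ _ hf0.ne']
end

section
/- Let L > 0, λ > 0, c > 0, let f : [0,L] → ℝ be continuously differentiable with f(x) > 0 for all x ∈ [0,L), and let p₀ : ℝ → ℝ be continuously differentiable. Define g(x) = 1/f(x), p̃(x) = (1/c) ∫₀ˣ f(s) ds, and p₁(x,t) = (f(x)/f(0)) · λ · p₀(t − p̃(x)) for x ∈ [0,L) and t ∈ ℝ. Then for all (x,t) ∈ (0,L) × ℝ, ∂p₁/∂t(x,t) = −c · ∂/∂x [ g(x) p₁(x,t) ], and p₁(0,t) = λ p₀(t) for all t ∈ ℝ. -/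
/-- The boundary-determined branch `p₁(x,t) = (f(x)/f(0)) λ p₀(t − p̃(x))` solves the
closed-loop equation `∂p₁/∂t = −c ∂(g(x)p₁)/∂x` with `g = 1/f`, together with the boundary
condition `p₁(0,t) = λ p₀(t)`. -/
theorem stmt9 (L lam c : ℝ) (hL : 0 < L) (hlam : 0 < lam) (hc : 0 < c)
    (f : ℝ → ℝ) (hf : ContDiffOn ℝ 1 f (Set.Icc 0 L))
    (hfpos : ∀ x ∈ Set.Ico (0:ℝ) L, 0 < f x)
    (p₀ : ℝ → ℝ) (hp₀ : ContDiff ℝ 1 p₀)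
    (g ptilde : ℝ → ℝ) (hg : ∀ x, g x = 1 / f x)
    (hpt : ∀ x, ptilde x = (1 / c) * ∫ s in (0:ℝ)..x, f s)
    (p₁ : ℝ → ℝ → ℝ)
    (hp₁ : ∀ x t : ℝ, p₁ x t = (f x / f 0) * lam * p₀ (t - ptilde x)) :
    (∀ x ∈ Set.Ioo (0:ℝ) L, ∀ t : ℝ, ∃ pt q : ℝ,
      HasDerivAt (fun τ => p₁ x τ) pt t ∧
      HasDerivAt (fun y => g y * p₁ y t) q x ∧ pt = -c * q) ∧
    (∀ t : ℝ, p₁ 0 t = lam * p₀ t) := by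
  have h0 : 0 < f 0 := hfpos 0 ⟨le_refl _, hL⟩
  refine ⟨?_, ?_⟩
  · intro x hx t
    have hnx : Set.Icc 0 L ∈ nhds x := Icc_mem_nhds hx.1 hx.2
    have hcont : ContinuousOn f (Set.Icc 0 L) := hf.continuousOn
    have hfx : 0 < f x := hfpos x ⟨hx.1.le, hx.2⟩
    have hint : IntervalIntegrable f MeasureTheory.volume 0 x := by
      apply ContinuousOn.intervalIntegrable
      rw [Set.uIcc_of_le hx.1.le]
      exact hcont.mono (Set.Icc_subset_Icc_right hx.2.le)
    have hmeas : StronglyMeasurableAtFilter f (nhds x) MeasureTheory.volume :=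
      ContinuousOn.stronglyMeasurableAtFilter isOpen_Ioo
        (hcont.mono Set.Ioo_subset_Icc_self) x hx
    have hI := intervalIntegral.integral_hasDerivAt_right hint hmeas (hcont.continuousAt hnx)
    have hP : HasDerivAt ptilde ((1 / c) * f x) x := by
      rw [funext hpt]
      exact hI.const_mul (1 / c)
    have hd : HasDerivAt p₀ (deriv p₀ (t - ptilde x)) (t - ptilde x) :=
      ((hp₀.differentiable (by norm_num)) _).hasDerivAt
    have h1 : HasDerivAt (fun τ => p₀ (τ - ptilde x)) (deriv p₀ (t - ptilde x)) t :=
      hd.comp_sub_const t (ptilde x)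
    have h2 : HasDerivAt (fun y => p₀ (t - ptilde y))
        (deriv p₀ (t - ptilde x) * (-((1 / c) * f x))) x :=
      HasDerivAt.comp x hd (hP.const_sub t)
    refine ⟨(f x / f 0) * lam * deriv p₀ (t - ptilde x),
      (lam / f 0) * (deriv p₀ (t - ptilde x) * (-((1 / c) * f x))), ?_, ?_, ?_⟩
    · simp only [hp₁]
      exact h1.const_mul _
    · refine (h2.const_mul (lam / f 0)).congr_of_eventuallyEq ?_
      filter_upwards [Ioo_mem_nhds hx.1 hx.2] with y hy
      have hfy : 0 < f y := hfpos y ⟨hy.1.le, hy.2⟩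
      rw [hg, hp₁]
      field_simp
    · field_simp
  · intro t
    rw [hp₁, hpt, intervalIntegral.integral_same, mul_zero, sub_zero, div_self h0.ne', one_mul]
end

section
/- Let L > 0, c > 0, let f : [0,L] → ℝ be continuously differentiable with f(x) > 0 for all x ∈ [0,L), and let p₁₀ : [0,L] → ℝ be continuously differentiable. Define g(x) = 1/f(x), p̃(x) = (1/c) ∫₀ˣ f(s) ds with inverse p̃⁻¹ on [0, p̃(L)], ψ(x,t) = p̃⁻¹( p̃(x) − t ), and p₁(x,t) = ( f(x)/f(ψ(x,t)) ) · p₁₀(ψ(x,t)) on the region D = {(x,t) : 0 < x < L, 0 ≤ t < p̃(x)}. Then p₁(x,0) = p₁₀(x) for all x ∈ (0,L), and at every interior point of D, ∂p₁/∂t(x,t) = −c · ∂/∂x [ g(x) p₁(x,t) ]. -/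
/-- The initial-data-determined branch `p₁(x,t) = (f(x)/f(ψ(x,t))) p₁₀(ψ(x,t))`, with
`ψ(x,t) = p̃⁻¹(p̃(x) − t)`, solves the closed-loop equation `∂p₁/∂t = −c ∂(g(x)p₁)/∂x`
with `g = 1/f` on `{0 < x < L, 0 < t < p̃(x)}`, and `p₁(x,0) = p₁₀(x)`. -/
theorem stmt10 (L c : ℝ) (hL : 0 < L) (hc : 0 < c)
    (f : ℝ → ℝ) (hf : ContDiffOn ℝ 1 f (Set.Icc 0 L))
    (hfpos : ∀ x ∈ Set.Ico (0:ℝ) L, 0 < f x)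
    (p₁₀ : ℝ → ℝ) (hp₁₀ : ContDiff ℝ 1 p₁₀)
    (g ptilde : ℝ → ℝ) (hg : ∀ x, g x = 1 / f x)
    (hpt : ∀ x, ptilde x = (1 / c) * ∫ s in (0:ℝ)..x, f s)
    (ptinv : ℝ → ℝ)
    (hinv : ∀ y ∈ Set.Icc 0 (ptilde L), ptinv y ∈ Set.Icc 0 L ∧ ptilde (ptinv y) = y)
    (ψ : ℝ → ℝ → ℝ) (hψ : ∀ x t : ℝ, ψ x t = ptinv (ptilde x - t))
    (p₁ : ℝ → ℝ → ℝ)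
    (hp₁ : ∀ x t : ℝ, p₁ x t = (f x / f (ψ x t)) * p₁₀ (ψ x t)) :
    (∀ x ∈ Set.Ioo (0:ℝ) L, p₁ x 0 = p₁₀ x) ∧
    (∀ x t : ℝ, 0 < x → x < L → 0 < t → t < ptilde x → ∃ pt q : ℝ,
      HasDerivAt (fun τ => p₁ x τ) pt t ∧
      HasDerivAt (fun y => g y * p₁ y t) q x ∧ pt = -c * q) := by
  have hfc : ContinuousOn f (Set.Icc 0 L) := hf.continuousOn
  have hpt' : ptilde = fun x => (1 / c) * ∫ s in (0:ℝ)..x, f s := funext hpt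
  have hfcat : ∀ x ∈ Set.Ioo 0 L, ContinuousAt f x := fun x hx =>
    hfc.continuousAt (Icc_mem_nhds hx.1 hx.2)
  have hder : ∀ x ∈ Set.Ioo 0 L, HasDerivAt ptilde ((1 / c) * f x) x := by
    intro x hx
    rw [hpt']
    refine HasDerivAt.const_mul _ (intervalIntegral.integral_hasDerivAt_right ?_ ?_ (hfcat x hx))
    · apply ContinuousOn.intervalIntegrable
      rw [Set.uIcc_of_le hx.1.le]
      exact hfc.mono (Set.Icc_subset_Icc_right hx.2.le)
    · exact (hfc.mono Set.Ioo_subset_Icc_self).stronglyMeasurableAtFilter isOpen_Ioo x hx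
  have hcont : ContinuousOn ptilde (Set.Icc 0 L) := by
    rw [hpt']
    refine ContinuousOn.mul continuousOn_const ?_
    have h := intervalIntegral.continuousOn_primitive_interval (f := f) (a := 0) (b := L)
      (μ := MeasureTheory.volume)
      (by rw [Set.uIcc_of_le hL.le]; exact hfc.integrableOn_Icc)
    rwa [Set.uIcc_of_le hL.le] at h
  have hmono : StrictMonoOn ptilde (Set.Icc 0 L) := by
    apply strictMonoOn_of_deriv_pos (convex_Icc 0 L) hcont
    intro x hx
    rw [interior_Icc] at hx
    rw [(hder x hx).deriv]
    have := hfpos x ⟨hx.1.le, hx.2⟩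
    positivity
  have h0 : ptilde 0 = 0 := by simp [hpt]
  have h0m : (0:ℝ) ∈ Set.Icc 0 L := ⟨le_rfl, hL.le⟩
  have hLm : L ∈ Set.Icc 0 L := ⟨hL.le, le_rfl⟩
  have hmaps : ∀ x ∈ Set.Icc 0 L, ptilde x ∈ Set.Icc 0 (ptilde L) := by
    intro x hx
    refine ⟨?_, hmono.monotoneOn hx hLm hx.2⟩
    rw [← h0]
    exact hmono.monotoneOn h0m hx hx.1
  have hleft : ∀ x ∈ Set.Icc 0 L, ptinv (ptilde x) = x := by
    intro x hx
    obtain ⟨h1, h2⟩ := hinv _ (hmaps x hx)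
    exact hmono.injOn h1 hx h2
  have hinvmono : MonotoneOn ptinv (Set.Icc 0 (ptilde L)) := by
    intro a ha b hb hab
    obtain ⟨h1, h2⟩ := hinv a ha
    obtain ⟨h3, h4⟩ := hinv b hb
    rw [← hmono.le_iff_le h1 h3, h2, h4]
    exact hab
  have himg : Set.Icc 0 L ⊆ ptinv '' Set.Icc 0 (ptilde L) := fun x hx =>
    ⟨ptilde x, hmaps x hx, hleft x hx⟩
  constructor
  · intro x hx
    have hx' : x ∈ Set.Icc 0 L := Set.Ioo_subset_Icc_self hx
    have hfx := hfpos x ⟨hx.1.le, hx.2⟩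
    rw [hp₁, hψ, sub_zero, hleft x hx', div_self hfx.ne', one_mul]
  intro x t hx0 hxL ht htx
  have hxI : x ∈ Set.Ioo 0 L := ⟨hx0, hxL⟩
  have hxL' : ptilde x < ptilde L := hmono ⟨hx0.le, hxL.le⟩ hLm hxL
  set w := ptilde x - t with hw
  have hw0 : 0 < w := by linarith
  have hwL : w < ptilde L := by linarith
  obtain ⟨hz, hzw⟩ := hinv w ⟨hw0.le, hwL.le⟩
  have hzI : ptinv w ∈ Set.Ioo 0 L := by
    constructor
    · rw [← hmono.lt_iff_lt h0m hz, h0, hzw]; exact hw0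
    · rw [← hmono.lt_iff_lt hz hLm, hzw]; exact hwL
  have hfz := hfpos _ ⟨hzI.1.le, hzI.2⟩
  have hwn : Set.Icc 0 (ptilde L) ∈ nhds w := Icc_mem_nhds hw0 hwL
  have hic : ContinuousAt ptinv w :=
    continuousAt_of_monotoneOn_of_image_mem_nhds hinvmono hwn
      (Filter.mem_of_superset (Icc_mem_nhds hzI.1 hzI.2) himg)
  have hid : HasDerivAt ptinv ((1 / c) * f (ptinv w))⁻¹ w :=
    HasDerivAt.of_local_left_inverse hic (hder _ hzI) (by positivity)
      (Filter.mem_of_superset hwn fun y hy => (hinv y hy).2)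
  have hfd : DifferentiableAt ℝ f (ptinv w) :=
    ((hf.differentiableOn one_ne_zero) _ hz).differentiableAt (Icc_mem_nhds hzI.1 hzI.2)
  have hpd : DifferentiableAt ℝ p₁₀ (ptinv w) :=
    (hp₁₀.differentiable one_ne_zero) _
  have hhd : DifferentiableAt ℝ (fun v => p₁₀ (ptinv v) / f (ptinv v)) w :=
    DifferentiableAt.div (hpd.comp w hid.differentiableAt) (hfd.comp w hid.differentiableAt) hfz.ne'
  obtain ⟨h', hh'⟩ : ∃ h', HasDerivAt (fun v => p₁₀ (ptinv v) / f (ptinv v)) h' w :=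
    ⟨_, hhd.hasDerivAt⟩
  refine ⟨f x * (h' * (-1)), h' * ((1 / c) * f x), ?_, ?_, ?_⟩
  · have h1 : HasDerivAt (fun τ => ptilde x - τ) (-1) t := (hasDerivAt_id t).const_sub _
    have h2 := (HasDerivAt.comp t hh' h1).const_mul (f x)
    refine h2.congr_of_eventuallyEq (Filter.Eventually.of_forall fun τ => ?_)
    simp only [hp₁, hψ, Function.comp]
    ring
  · have h1 : HasDerivAt (fun y => ptilde y - t) ((1 / c) * f x) x := (hder x hxI).sub_const t
    have h2 := HasDerivAt.comp x hh' h1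
    refine h2.congr_of_eventuallyEq ?_
    filter_upwards [Ioo_mem_nhds hx0 hxL] with y hy
    have hfy := (hfpos y ⟨hy.1.le, hy.2⟩).ne'
    simp only [hp₁, hψ, hg, Function.comp]
    generalize f (ptinv (ptilde y - t)) = b
    rw [one_div, div_mul_eq_mul_div, mul_div_assoc, inv_mul_cancel_left₀ hfy]
  · field_simp
end

section
/- Let L > 0, λ > 0, c > 0, let f : [0,L] → ℝ be continuous with f(x) > 0 for x ∈ [0,L), define p̃(x) = (1/c) ∫₀ˣ f(s) ds and T = p̃(L). Let p₀ : ℝ → ℝ be bounded and continuous, differentiable on (T,∞), satisfying p₀′(t) = c (λ/f(0)) ( p₀(t − T) − p₀(t) ) for all t > T. Define p₁(x,t) = (f(x)/f(0)) λ p₀(t − p̃(x)). Then for every t > 2T and every h > 0, ∫₀^L | p₁(x, t + h) − p₁(x, t) | dx ≤ 2 c² (λ/f(0))² · T · h · sup_{s ≥ 0} |p₀(s)|. -/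
/-- `L¹`-in-repair-time equicontinuity estimate of the closed-loop failure-mode density
`p₁(x,t) = (f(x)/f(0)) λ p₀(t − p̃(x))` for `t > 2T`, where `p₀` solves the delay equation
`p₀′(t) = c (λ/f(0)) (p₀(t − T) − p₀(t))` for `t > T` and `T = p̃(L)`. -/
theorem stmt13 (L lam c : ℝ) (hL : 0 < L) (hlam : 0 < lam) (hc : 0 < c)
    (f : ℝ → ℝ) (hfc : ContinuousOn f (Set.Icc 0 L))
    (hfpos : ∀ x ∈ Set.Ico (0:ℝ) L, 0 < f x)
    (ptilde : ℝ → ℝ) (hpt : ∀ x, ptilde x = (1 / c) * ∫ s in (0:ℝ)..x, f s)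
    (T : ℝ) (hT : T = ptilde L)
    (p₀ : ℝ → ℝ) (hp₀c : Continuous p₀)
    (hode : ∀ t > T, HasDerivAt p₀ (c * (lam / f 0) * (p₀ (t - T) - p₀ t)) t)
    (C : ℝ) (hbdd : ∀ s ≥ (0:ℝ), |p₀ s| ≤ C)
    (p₁ : ℝ → ℝ → ℝ)
    (hp₁ : ∀ x t : ℝ, p₁ x t = (f x / f 0) * lam * p₀ (t - ptilde x)) :
    ∀ t > 2 * T, ∀ h > (0:ℝ),
      (∫ x in (0:ℝ)..L, |p₁ x (t + h) - p₁ x t|) ≤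
        2 * c ^ 2 * (lam / f 0) ^ 2 * T * h * C := by
  intro t ht h hh
  have hf0 : 0 < f 0 := hfpos 0 ⟨le_refl _, hL⟩
  have hnn : ∀ x ∈ Set.Icc (0:ℝ) L, 0 ≤ f x := by
    have hcl : closure (Set.Ico (0:ℝ) L) = Set.Icc 0 L := closure_Ico hL.ne
    intro x hx
    rw [← hcl] at hx hfc
    exact le_on_closure (f := fun _ => (0:ℝ)) (fun y hy => (hfpos y hy).le)
      continuousOn_const hfc hx
  have hint : ∀ a ∈ Set.Icc (0:ℝ) L, ∀ b ∈ Set.Icc (0:ℝ) L,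
      IntervalIntegrable f MeasureTheory.volume a b := by
    intro a ha b hb
    exact (hfc.mono (Set.uIcc_subset_Icc ha hb)).intervalIntegrable
  have h0m : (0:ℝ) ∈ Set.Icc (0:ℝ) L := ⟨le_refl _, hL.le⟩
  have hLm : L ∈ Set.Icc (0:ℝ) L := ⟨hL.le, le_refl _⟩
  have hcT : ∫ s in (0:ℝ)..L, f s = c * T := by
    rw [hT, hpt]; field_simp
  have hptT : ∀ x ∈ Set.Icc (0:ℝ) L, ptilde x ≤ T := by
    intro x hx
    rw [hT, hpt, hpt]
    have h1 := intervalIntegral.integral_add_adjacent_intervals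
      (hint 0 h0m x hx) (hint x hx L hLm)
    have h2 : 0 ≤ ∫ s in x..L, f s :=
      intervalIntegral.integral_nonneg hx.2 (fun u hu => hnn u ⟨hx.1.trans hu.1, hu.2⟩)
    have h3 : 0 ≤ 1 / c := by positivity
    exact mul_le_mul_of_nonneg_left (by linarith) h3
  have hT0 : 0 ≤ T := by
    have h2 : 0 ≤ ∫ s in (0:ℝ)..L, f s := intervalIntegral.integral_nonneg hL.le hnn
    rw [hcT] at h2
    exact nonneg_of_mul_nonneg_right h2 hc
  have hlip : ∀ a > T, |p₀ (a + h) - p₀ a| ≤ c * (lam / f 0) * (2 * C) * h := by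
    intro a ha
    have := (convex_Ioi T).norm_image_sub_le_of_norm_hasDerivWithin_le
      (s := Set.Ioi T) (f := p₀) (f' := fun t => c * (lam / f 0) * (p₀ (t - T) - p₀ t))
      (C := c * (lam / f 0) * (2 * C)) (x := a) (y := a + h)
      (fun x hx => (hode x hx).hasDerivWithinAt) ?_ (Set.mem_Ioi.mpr ha)
      (Set.mem_Ioi.mpr (by linarith))
    · simpa [Real.norm_eq_abs, abs_of_pos hh] using this
    · intro x hx
      have hx' : T < x := hx
      have h1 := hbdd (x - T) (by linarith)
      have h2 := hbdd x (by linarith)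
      have hk : 0 < c * (lam / f 0) := by positivity
      rw [Real.norm_eq_abs, abs_mul, abs_of_pos hk]
      apply mul_le_mul_of_nonneg_left _ hk.le
      have := abs_sub (p₀ (x - T)) (p₀ x)
      linarith
  have key := intervalIntegral.norm_integral_le_of_norm_le (μ := MeasureTheory.volume)
    (f := fun x => |p₁ x (t + h) - p₁ x t|)
    (g := fun x => (lam / f 0 * (c * (lam / f 0) * (2 * C) * h)) * f x) hL.le
    (Filter.Eventually.of_forall ?_) ((hint 0 h0m L hLm).const_mul _)
  · rw [intervalIntegral.integral_const_mul, hcT] at key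
    refine (le_abs_self _).trans (key.trans (le_of_eq ?_))
    ring
  · intro x hx
    have hxm : x ∈ Set.Icc (0:ℝ) L := ⟨hx.1.le, hx.2⟩
    have h1 := hlip (t - ptilde x) (by linarith [hptT x hxm])
    have h2 := hnn x hxm
    have e : p₁ x (t + h) - p₁ x t
        = (f x / f 0 * lam) * (p₀ (t - ptilde x + h) - p₀ (t - ptilde x)) := by
      rw [hp₁, hp₁, show t + h - ptilde x = t - ptilde x + h by ring]; ring
    have hk : 0 ≤ f x / f 0 * lam := by positivity
    rw [Real.norm_eq_abs, abs_abs, e, abs_mul, abs_of_nonneg hk]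
    refine (mul_le_mul_of_nonneg_left h1 hk).trans (le_of_eq ?_)
    ring
end

section
/- Let L > 0, λ > 0, c > 0, let f : [0,L] → ℝ be continuous with f(x) > 0 for x ∈ [0,L), define g(x) = 1/f(x), p̃(x) = (1/c) ∫₀ˣ f(s) ds and T = p̃(L). Let p₀ : ℝ → ℝ be bounded and continuous, differentiable on (T,∞), satisfying p₀′(t) = c g(0) λ ( p₀(t − T) − p₀(t) ) for all t > T, and define p₁(x,t) = (f(x)/f(0)) λ p₀(t − p̃(x)). Then for every t > 2T, every l ∈ (0,L), and every real number p₀*, the function x ↦ c g(x) p₁(x,t) is differentiable on (0,l) and sup_{x ∈ (0,l)} | ∂/∂x [ c g(x) p₁(x,t) ] | ≤ 2 c (g(0) λ)² · ( sup_{x ∈ [0,l]} f(x) ) · sup_{τ ∈ [t − 2T, t]} | p₀(τ) − p₀* |. -/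
/-- Pointwise bound on the feedback term `∂(c g(x) p₁(x,t))/∂x` of the closed-loop system
for `t > 2T`, in terms of the deviation of `p₀` from a target value `p₀*`. -/
theorem stmt16 (L lam c : ℝ) (hL : 0 < L) (hlam : 0 < lam) (hc : 0 < c)
    (f : ℝ → ℝ) (hfc : ContinuousOn f (Set.Icc 0 L))
    (hfpos : ∀ x ∈ Set.Ico (0:ℝ) L, 0 < f x)
    (g : ℝ → ℝ) (hg : ∀ x, g x = 1 / f x)
    (ptilde : ℝ → ℝ) (hpt : ∀ x, ptilde x = (1 / c) * ∫ s in (0:ℝ)..x, f s)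
    (T : ℝ) (hT : T = ptilde L)
    (p₀ : ℝ → ℝ) (hp₀c : Continuous p₀) (hp₀bdd : ∃ C, ∀ s : ℝ, |p₀ s| ≤ C)
    (hode : ∀ t > T, HasDerivAt p₀ (c * g 0 * lam * (p₀ (t - T) - p₀ t)) t)
    (p₁ : ℝ → ℝ → ℝ)
    (hp₁ : ∀ x t : ℝ, p₁ x t = (f x / f 0) * lam * p₀ (t - ptilde x)) :
    ∀ t > 2 * T, ∀ l ∈ Set.Ioo (0:ℝ) L, ∀ p₀s : ℝ,
      DifferentiableOn ℝ (fun x => c * g x * p₁ x t) (Set.Ioo 0 l) ∧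
      ∀ x ∈ Set.Ioo (0:ℝ) l,
        |deriv (fun y => c * g y * p₁ y t) x| ≤
          2 * c * (g 0 * lam) ^ 2 * sSup (f '' Set.Icc 0 l) *
            sSup ((fun τ => |p₀ τ - p₀s|) '' Set.Icc (t - 2 * T) t) := by
  intro t ht l hl p₀s
  have hint : ∀ a b : ℝ, 0 ≤ a → a ≤ b → b ≤ L → IntervalIntegrable f MeasureTheory.volume a b := by
    intro a b ha hab hb
    apply ContinuousOn.intervalIntegrable
    rw [Set.uIcc_of_le hab]
    exact hfc.mono (Set.Icc_subset_Icc ha hb)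
  have hf0 : 0 < f 0 := hfpos 0 ⟨le_rfl, hL⟩
  have hpos : ∀ x ∈ Set.Ioo (0:ℝ) L, 0 < ptilde x ∧ ptilde x < T := by
    intro x hx
    have h1 : 0 < ∫ s in (0:ℝ)..x, f s :=
      intervalIntegral.intervalIntegral_pos_of_pos_on (hint 0 x le_rfl hx.1.le hx.2.le)
        (fun y hy => hfpos y ⟨hy.1.le, hy.2.trans hx.2⟩) hx.1
    have h2 : 0 < ∫ s in x..L, f s :=
      intervalIntegral.intervalIntegral_pos_of_pos_on (hint x L hx.1.le hx.2.le le_rfl)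
        (fun y hy => hfpos y ⟨(hx.1.trans hy.1).le, hy.2⟩) hx.2
    have h3 := intervalIntegral.integral_add_adjacent_intervals
      (hint 0 x le_rfl hx.1.le hx.2.le) (hint x L hx.1.le hx.2.le le_rfl)
    have hc' : 0 < 1 / c := by positivity
    rw [hT, hpt, hpt]
    exact ⟨mul_pos hc' h1, mul_lt_mul_of_pos_left (by linarith) hc'⟩
  have hder : ∀ x ∈ Set.Ioo (0:ℝ) L, HasDerivAt (fun y => c * g y * p₁ y t)
      (c * g 0 * lam * ((c * g 0 * lam * (p₀ (t - ptilde x - T) - p₀ (t - ptilde x)))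
        * (-((1 / c) * f x)))) x := by
    intro x hx
    have hnhd : Set.Ioo (0:ℝ) L ∈ nhds x := isOpen_Ioo.mem_nhds hx
    have hca : ContinuousAt f x :=
      hfc.continuousAt (Filter.mem_of_superset hnhd Set.Ioo_subset_Icc_self)
    have hm : StronglyMeasurableAtFilter f (nhds x) MeasureTheory.volume :=
      (hfc.mono Set.Ioo_subset_Icc_self).stronglyMeasurableAtFilter isOpen_Ioo x hx
    have hI := intervalIntegral.integral_hasDerivAt_right
      (hint 0 x le_rfl hx.1.le hx.2.le) hm hca
    have hP : HasDerivAt ptilde ((1 / c) * f x) x := by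
      rw [funext hpt]
      exact hI.const_mul (1 / c)
    have hP2 : HasDerivAt (fun y => t - ptilde y) (-((1 / c) * f x)) x := hP.const_sub t
    have hlt : t - ptilde x > T := by
      have := (hpos x hx).2
      linarith
    have hcomp := ((hode _ hlt).comp x hP2).const_mul (c * g 0 * lam)
    refine hcomp.congr_of_eventuallyEq ?_
    filter_upwards [hnhd] with y hy
    have hy0 : 0 < f y := hfpos y ⟨hy.1.le, hy.2⟩
    simp only [hp₁, hg, Function.comp]
    field_simp
  refine ⟨fun x hx => (hder x ⟨hx.1, hx.2.trans hl.2⟩).differentiableAt.differentiableWithinAt, ?_⟩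
  intro x hx
  have hxL : x ∈ Set.Ioo (0:ℝ) L := ⟨hx.1, hx.2.trans hl.2⟩
  rw [(hder x hxL).deriv]
  obtain ⟨hp1, hp2⟩ := hpos x hxL
  have hfx : 0 < f x := hfpos x ⟨hx.1.le, hxL.2⟩
  have hF : f x ≤ sSup (f '' Set.Icc 0 l) :=
    le_csSup (isCompact_Icc.image_of_continuousOn
      (hfc.mono (Set.Icc_subset_Icc le_rfl hl.2.le))).bddAbove ⟨x, ⟨hx.1.le, hx.2.le⟩, rfl⟩
  have hB : BddAbove ((fun τ => |p₀ τ - p₀s|) '' Set.Icc (t - 2 * T) t) :=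
    (isCompact_Icc.image (by fun_prop)).bddAbove
  have h1 : |p₀ (t - ptilde x - T) - p₀s| ≤ _ :=
    le_csSup hB ⟨t - ptilde x - T, ⟨by linarith, by linarith⟩, rfl⟩
  have h2 : |p₀ (t - ptilde x) - p₀s| ≤ _ :=
    le_csSup hB ⟨t - ptilde x, ⟨by linarith, by linarith⟩, rfl⟩
  generalize sSup ((fun τ => |p₀ τ - p₀s|) '' Set.Icc (t - 2 * T) t) = S at *
  generalize sSup (f '' Set.Icc 0 l) = F at *
  have hS : 0 ≤ S := (abs_nonneg _).trans h1
  have habs : |p₀ (t - ptilde x - T) - p₀ (t - ptilde x)| ≤ 2 * S := by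
    rw [abs_le] at *
    constructor <;> linarith [h1.1, h1.2, h2.1, h2.2]
  have heq : c * g 0 * lam * ((c * g 0 * lam * (p₀ (t - ptilde x - T) - p₀ (t - ptilde x)))
        * (-((1 / c) * f x))) =
      -((c * (g 0 * lam) ^ 2 * f x) * (p₀ (t - ptilde x - T) - p₀ (t - ptilde x))) := by
    field_simp
  have hk : 0 ≤ c * (g 0 * lam) ^ 2 := by positivity
  rw [heq, abs_neg, abs_mul, abs_of_nonneg (mul_nonneg hk hfx.le)]
  calc c * (g 0 * lam) ^ 2 * f x * |p₀ (t - ptilde x - T) - p₀ (t - ptilde x)|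
      ≤ c * (g 0 * lam) ^ 2 * F * (2 * S) := by
        apply mul_le_mul (mul_le_mul_of_nonneg_left hF hk) habs (abs_nonneg _)
        exact mul_nonneg hk (hfx.le.trans hF)
    _ = 2 * c * (g 0 * lam) ^ 2 * F * S := by ring
end
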